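/- Let μ = Σ_{i=1}^g a_i ∧ b_i ∧ c be the intersection form of M = Σ_g × S^1 in the standard symplectic basis of H^1(Σ_g) together with the circle class c, and let δ be the associated (2g+1)×(2g+1) skew-symmetric matrix of linear forms over ℂ[x_1,…,x_{2g+1}]. Then the Pfaffian polynomial Pf(μ), defined by pf(δ(i;i)) = (−1)^{i+1} x_i Pf(μ), equals x_{2g+1}^{g−1} up to sign. -/

import Mathlib

open MvPolynomial

/-!
The Pfaffian of a skew-symmetric matrix sums over perfect matchings of the index set. In `δ(i;i)`
exactly one perfect matching contributes: the vertices `a_k, b_k` are joined only to each other and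
to `c`, so if `i = c` every `a_k` is matched with `b_k`, and if `i ∈ {a_j, b_j}` the symplectic
partner `p` of `i` must be matched with `c`, which forces `a_k ~ b_k` for all `k ≠ j`. The product
of the entries along this matching is `x_c ^ g`, respectively `± x_i x_c ^ (g-1)`.

In terms of the sum over permutations, the indices are first rearranged so that the contributing
matching is `{2k, 2k+1}`; for `i ∈ {a_j, b_j}` this moves `c` next to `p` by a cycle of odd length,
so no sign appears. The permutations compatible with this matching form the hyperoctahedral group,
which has `2 ^ g * g!` elements (`Equiv.prodShear`), and all of them contribute the same product
(`sum_perm_eq`). This cancels the normalisation of the Pfaffian and gives `pfaffian_eq_prod`.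
-/

/-- The variable `x_j` of `ℂ[x_0, …, x_{2g}]` (or `0` when out of range). -/
noncomputable def xv (g : ℕ) (j : ℕ) : MvPolynomial (Fin (2 * g + 1)) ℂ :=
  if h : j < 2 * g + 1 then X ⟨j, h⟩ else 0

/-- The skew-symmetric matrix `δ` of linear forms associated to the intersection form
`μ = Σ_{i=1}^g a_i ∧ b_i ∧ c` of `M = Σ_g × S¹`:  with the basis ordered as
`a_1, b_1, …, a_g, b_g, c` (0-indexed: `a_i = 2i`, `b_i = 2i+1`, `c = 2g`), its entries are
`δ_{a_i, b_i} = x_c`, `δ_{a_i, c} = -x_{b_i}`, `δ_{b_i, c} = x_{a_i}` (and skew-symmetry). -/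
noncomputable def deltaSigma (g : ℕ) :
    Matrix (Fin (2 * g + 1)) (Fin (2 * g + 1)) (MvPolynomial (Fin (2 * g + 1)) ℂ) :=
  fun i k =>
    if (i : ℕ) < 2 * g ∧ (k : ℕ) < 2 * g then
      (if (k : ℕ) = (i : ℕ) + 1 ∧ (i : ℕ) % 2 = 0 then xv g (2 * g)
       else if (i : ℕ) = (k : ℕ) + 1 ∧ (k : ℕ) % 2 = 0 then -(xv g (2 * g))
       else 0)
    else if (i : ℕ) < 2 * g ∧ (k : ℕ) = 2 * g then
      (if (i : ℕ) % 2 = 0 then -(xv g ((i : ℕ) + 1)) else xv g ((i : ℕ) - 1))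
    else if (i : ℕ) = 2 * g ∧ (k : ℕ) < 2 * g then
      (if (k : ℕ) % 2 = 0 then xv g ((k : ℕ) + 1) else -(xv g ((k : ℕ) - 1)))
    else 0

/-- The Pfaffian of a `2m × 2m` skew-symmetric matrix over `ℂ[x_0, …, x_{N-1}]`, via the
standard formula `pf(M) = (2^m m!)⁻¹ Σ_σ sgn(σ) Π_i M_{σ(2i), σ(2i+1)}`. -/
noncomputable def pfaffian {N : ℕ} (m : ℕ)
    (M : Matrix (Fin (2 * m)) (Fin (2 * m)) (MvPolynomial (Fin N) ℂ)) :
    MvPolynomial (Fin N) ℂ :=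
  ((2 ^ m * Nat.factorial m : ℂ))⁻¹ •
    ∑ σ : Equiv.Perm (Fin (2 * m)),
      ((Equiv.Perm.sign σ : ℤ) : MvPolynomial (Fin N) ℂ) *
        ∏ i : Fin m, M (σ ⟨2 * (i : ℕ), by omega⟩) (σ ⟨2 * (i : ℕ) + 1, by omega⟩)

/-- The `k`-th pair of positions in `Fin (2 * m)` consists of `2k` and `2k + 1`. -/
def pairEquiv (m : ℕ) : Fin m × Fin 2 ≃ Fin (2 * m) :=
  finProdFinEquiv.trans (finCongr (mul_comm m 2))

lemma pairEquiv_val (m : ℕ) (k : Fin m) (b : Fin 2) :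
    (pairEquiv m (k, b) : ℕ) = 2 * k + b := by
  simp [pairEquiv]; omega

lemma sign_prodShear {m : ℕ} (π : Equiv.Perm (Fin m)) (s : Fin m → Equiv.Perm (Fin 2)) :
    Equiv.Perm.sign (Equiv.prodShear π s : Equiv.Perm (Fin m × Fin 2)) =
      ∏ k, Equiv.Perm.sign (s k) := by
  have h : (Equiv.prodShear π s : Equiv.Perm (Fin m × Fin 2)) =
      Equiv.prodCongrLeft (fun _ : Fin 2 => π) * Equiv.prodCongrRight s := by
    ext x <;> simp [Equiv.prodShear]
  rw [h, map_mul, Equiv.Perm.sign_prodCongrRight, Equiv.Perm.sign_prodCongrLeft]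
  simp

lemma prodShear_injective {m : ℕ} :
    Function.Injective (fun x : Equiv.Perm (Fin m) × (Fin m → Equiv.Perm (Fin 2)) =>
      (Equiv.prodShear x.1 x.2 : Equiv.Perm (Fin m × Fin 2))) := by
  rintro ⟨π, s⟩ ⟨π', s'⟩ h
  have h' : ∀ k b, (π k, s k b) = (π' k, s' k b) := fun k b =>
    congrArg (fun f : Equiv.Perm (Fin m × Fin 2) => f (k, b)) h
  refine Prod.ext (Equiv.ext fun k => congrArg Prod.fst (h' k 0))
    (funext fun k => Equiv.ext fun b => congrArg Prod.snd (h' k b))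

lemma mem_range_prodShear {m : ℕ} (σ : Equiv.Perm (Fin m × Fin 2))
    (h : ∀ k, (σ (k, 0)).1 = (σ (k, 1)).1) :
    ∃ x : Equiv.Perm (Fin m) × (Fin m → Equiv.Perm (Fin 2)), Equiv.prodShear x.1 x.2 = σ := by
  have h' : ∀ k b, (σ (k, b)).1 = (σ (k, 0)).1 := by
    intro k b
    fin_cases b
    · rfl
    · exact (h k).symm
  have hsurj : Function.Surjective fun k => (σ (k, 0)).1 := by
    intro k
    refine ⟨(σ.symm (k, 0)).1, ?_⟩
    have := h' (σ.symm (k, 0)).1 (σ.symm (k, 0)).2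
    simpa using this.symm
  have hinj : ∀ k, Function.Injective fun b => (σ (k, b)).2 := by
    intro k b b' hb
    have : σ (k, b) = σ (k, b') := Prod.ext ((h' k b).trans (h' k b').symm) hb
    simpa using this
  refine ⟨(Equiv.ofBijective _ (Finite.injective_iff_bijective.1
      (Finite.injective_iff_surjective.2 hsurj)),
    fun k => Equiv.ofBijective _ (Finite.injective_iff_bijective.1 (hinj k))), ?_⟩
  ext x
  · simp [Equiv.prodShear, h' x.1 x.2]
  · simp [Equiv.prodShear]

/-- If the only perfect matching with nonzero entries pairs `(k, 0)` with `(k, 1)` for every `k`,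
the unnormalised Pfaffian sum is `2 ^ m * m!` times the product of the entries along it. The
hypotheses `h0`, `h1`, `hN` ensure this uniqueness: `(j, 0)` is joined to at most `(j, 1)`, and any
two vertices of different pairs that are joined include `(j, 1)`. -/
lemma sum_perm_eq {R : Type*} [CommRing R] {m : ℕ} (N : Fin m × Fin 2 → Fin m × Fin 2 → R)
    (d : Fin m → R) (j : Fin m)
    (hd : ∀ k, N (k, 0) (k, 1) = d k) (hd' : ∀ k, N (k, 1) (k, 0) = -d k)
    (h0 : ∀ y, y ≠ (j, 1) → N (j, 0) y = 0) (h1 : ∀ y, y ≠ (j, 1) → N y (j, 0) = 0)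
    (hN : ∀ x y, x.1 ≠ y.1 → x ≠ (j, 1) → y ≠ (j, 1) → N x y = 0) :
    ∑ σ : Equiv.Perm (Fin m × Fin 2), ((Equiv.Perm.sign σ : ℤ) : R) *
      ∏ k, N (σ (k, 0)) (σ (k, 1)) = (2 ^ m * m.factorial : ℕ) * ∏ k, d k := by
  have hzero : ∀ σ : Equiv.Perm (Fin m × Fin 2),
      (¬ ∀ k, (σ (k, 0)).1 = (σ (k, 1)).1) → ∏ k, N (σ (k, 0)) (σ (k, 1)) = 0 := by
    intro σ hσ
    push Not at hσ
    obtain ⟨k, hk⟩ := hσ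
    by_cases hq : σ (k, 0) ≠ (j, 1) ∧ σ (k, 1) ≠ (j, 1)
    · exact Finset.prod_eq_zero (Finset.mem_univ k) (hN _ _ hk hq.1 hq.2)
    -- `(j, 1)` is matched outside its pair, so `(j, 0)` is not matched with `(j, 1)`.
    obtain ⟨⟨l, b⟩, hl⟩ := σ.surjective (j, 0)
    have hlk : l ≠ k := by
      rintro rfl
      fin_cases b <;> simp_all
    have hne : ∀ b, σ (l, b) ≠ (j, 1) := by
      intro b hb
      rcases not_and_or.1 hq with h | h <;> rw [not_not] at h <;>
        exact hlk (congrArg Prod.fst (σ.injective (hb.trans h.symm)))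
    refine Finset.prod_eq_zero (Finset.mem_univ l) ?_
    fin_cases b
    · exact (congrArg (N · _) hl).trans (h0 _ (hne 1))
    · exact (congrArg (N _ ·) hl).trans (h1 _ (hne 0))
  have hval : ∀ x : Equiv.Perm (Fin m) × (Fin m → Equiv.Perm (Fin 2)),
      ((Equiv.Perm.sign (Equiv.prodShear x.1 x.2 : Equiv.Perm (Fin m × Fin 2)) : ℤ) : R) *
        ∏ k, N ((Equiv.prodShear x.1 x.2 : Equiv.Perm (Fin m × Fin 2)) (k, 0))
          ((Equiv.prodShear x.1 x.2 : Equiv.Perm (Fin m × Fin 2)) (k, 1)) = ∏ k, d k := by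
    rintro ⟨π, s⟩
    rw [sign_prodShear, ← Equiv.prod_comp π d]
    push_cast
    rw [← Finset.prod_mul_distrib]
    refine Finset.prod_congr rfl fun k _ => ?_
    have hs : s k = 1 ∨ s k = Equiv.swap 0 1 := by
      generalize s k = t
      revert t
      decide
    rcases hs with hs | hs <;> simp [Equiv.prodShear, hs, hd, hd']
  rw [← Finset.sum_subset (Finset.subset_univ (Finset.univ.image
      (fun x : Equiv.Perm (Fin m) × (Fin m → Equiv.Perm (Fin 2)) =>
        (Equiv.prodShear x.1 x.2 : Equiv.Perm (Fin m × Fin 2))))),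
    Finset.sum_image (fun _ _ _ _ h => prodShear_injective h), Finset.sum_congr rfl
      (fun x _ => hval x)]
  · simp [Fintype.card_perm, mul_comm]
  · intro σ _ hσ
    rw [hzero σ, mul_zero]
    intro h
    obtain ⟨x, hx⟩ := mem_range_prodShear σ h
    exact hσ (Finset.mem_image.2 ⟨x, Finset.mem_univ _, hx⟩)

/-- The Pfaffian of a matrix which, after an even rearrangement `τ` of the indices, has
`{2k, 2k+1}` as its only contributing perfect matching. -/
lemma pfaffian_eq_prod {n m : ℕ}
    (M : Matrix (Fin (2 * m)) (Fin (2 * m)) (MvPolynomial (Fin n) ℂ))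
    (τ : Equiv.Perm (Fin (2 * m))) (hτ : Equiv.Perm.sign τ = 1)
    (N : Fin m × Fin 2 → Fin m × Fin 2 → MvPolynomial (Fin n) ℂ)
    (hMN : ∀ x y, M (τ (pairEquiv m x)) (τ (pairEquiv m y)) = N x y)
    (d : Fin m → MvPolynomial (Fin n) ℂ) (j : Fin m)
    (hd : ∀ k, N (k, 0) (k, 1) = d k) (hd' : ∀ k, N (k, 1) (k, 0) = -d k)
    (h0 : ∀ y, y ≠ (j, 1) → N (j, 0) y = 0) (h1 : ∀ y, y ≠ (j, 1) → N y (j, 0) = 0)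
    (hN : ∀ x y, x.1 ≠ y.1 → x ≠ (j, 1) → y ≠ (j, 1) → N x y = 0) :
    pfaffian m M = ∏ k, d k := by
  have key := sum_perm_eq N d j hd hd' h0 h1 hN
  have hsum : ∑ σ : Equiv.Perm (Fin (2 * m)),
      ((Equiv.Perm.sign σ : ℤ) : MvPolynomial (Fin n) ℂ) *
        ∏ i : Fin m, M (σ ⟨2 * (i : ℕ), by omega⟩) (σ ⟨2 * (i : ℕ) + 1, by omega⟩) =
      ∑ σ : Equiv.Perm (Fin m × Fin 2), ((Equiv.Perm.sign σ : ℤ) : MvPolynomial (Fin n) ℂ) *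
        ∏ k, N (σ (k, 0)) (σ (k, 1)) := by
    symm
    refine Fintype.sum_equiv ((pairEquiv m).permCongr.trans (Equiv.mulLeft τ)) _ _ fun σ => ?_
    have e0 : ∀ i : Fin m, (⟨2 * (i : ℕ), by omega⟩ : Fin (2 * m)) = pairEquiv m (i, 0) :=
      fun i => Fin.ext (by simp [pairEquiv_val])
    have e1 : ∀ i : Fin m, (⟨2 * (i : ℕ) + 1, by omega⟩ : Fin (2 * m)) = pairEquiv m (i, 1) :=
      fun i => Fin.ext (by simp [pairEquiv_val])
    simp [e0, e1, hτ, hMN, Equiv.permCongr_apply]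
  rw [pfaffian, hsum, key, ← nsmul_eq_mul, ← Nat.cast_smul_eq_nsmul ℂ, smul_smul]
  push_cast
  rw [inv_mul_cancel₀, one_smul]
  exact mul_ne_zero (pow_ne_zero _ two_ne_zero) (Nat.cast_ne_zero.2 m.factorial_ne_zero)

/-- For `i ∈ {2j, 2j+1}`, an even rearrangement of the indices of `δ(i;i)` which puts the partner
`4j + 1 - i` of `i` and the last index `2g` into the `j`-th pair, and `2k, 2k+1` into the `k`-th pair
for `k ≠ j`. -/
lemma exists_reorder (g : ℕ) (j : Fin g) (i : Fin (2 * g + 1))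
    (hi : (i : ℕ) = 2 * j ∨ (i : ℕ) = 2 * j + 1) :
    ∃ τ : Equiv.Perm (Fin (2 * g)), Equiv.Perm.sign τ = 1 ∧ ∀ k b,
      (i.succAbove (τ (pairEquiv g (k, b))) : ℕ) =
        if k = j then (if b = 0 then 4 * (j : ℕ) + 1 - i else 2 * g) else 2 * k + b := by
  have hj := j.2
  let u : Fin (2 * g) := ⟨2 * j + 1, by omega⟩
  let v : Fin (2 * g) := ⟨2 * g - 1, by omega⟩
  have huv : u ≤ v := Fin.le_def.2 (by simp only [u, v]; omega)
  have : NeZero (2 * g) := ⟨by omega⟩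
  have hv : (Fin.cycleIcc u v).symm u = v := by
    rw [Equiv.symm_apply_eq, Fin.cycleIcc_of_last huv]
  have hlt : ∀ t, t < u → (Fin.cycleIcc u v).symm t = t := fun t ht => by
    rw [Equiv.symm_apply_eq, Fin.cycleIcc_of_lt ht]
  have hgt : ∀ t : Fin (2 * g), u < t →
      (Fin.cycleIcc u v).symm t = ⟨t - 1, by omega⟩ := fun t ht => by
    have ht' := Fin.lt_def.1 ht
    have ht2 := t.2
    simp only [u] at ht'
    rw [Equiv.symm_apply_eq, Fin.cycleIcc_of_ge_of_lt]
    · apply Fin.ext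
      rw [Fin.val_add_one_of_lt']
      · simp only; omega
      · simp only; omega
    · exact Fin.le_def.2 (by simp only [u]; omega)
    · exact Fin.lt_def.2 (by simp only [v]; omega)
  refine ⟨(Fin.cycleIcc u v).symm, ?_, ?_⟩
  · rw [Equiv.Perm.sign_symm, Fin.sign_cycleIcc_of_le huv]
    exact Even.neg_one_pow ⟨g - 1 - j, by simp only [u, v]; omega⟩
  · intro k b
    have hk := k.2
    have hb := b.2
    have hval := pairEquiv_val g k b
    have hkj : k = j ↔ (k : ℕ) = j := Fin.ext_iff
    have hb0 : b = 0 ↔ (b : ℕ) = 0 := Fin.ext_iff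
    simp only [hkj, hb0]
    rcases lt_trichotomy (pairEquiv g (k, b)) u with h | h | h
    · rw [hlt _ h]
      simp only [Fin.lt_def, u, hval] at h
      simp only [Fin.succAbove, Fin.lt_def, Fin.val_castSucc, hval]
      split_ifs <;> simp [hval] <;> omega
    · rw [h, hv]
      simp only [Fin.ext_iff, u, hval] at h
      simp only [Fin.succAbove, Fin.lt_def, Fin.val_castSucc, v]
      split_ifs <;> simp <;> omega
    · rw [hgt _ h]
      simp only [Fin.lt_def, u, hval] at h
      simp only [Fin.succAbove, Fin.lt_def, Fin.val_castSucc, hval]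
      split_ifs <;> simp <;> omega

lemma xv_val (g : ℕ) (i : Fin (2 * g + 1)) (n : ℕ) (h : n = i) : xv g n = X i := by
  subst h
  rw [xv, dif_pos i.2]

lemma deltaSigma_pair {g : ℕ} {r s : Fin (2 * g + 1)} {k : ℕ} (hk : k < g)
    (hr : (r : ℕ) = 2 * k) (hs : (s : ℕ) = 2 * k + 1) :
    deltaSigma g r s = X (Fin.last (2 * g)) ∧ deltaSigma g s r = -X (Fin.last (2 * g)) := by
  rw [← xv_val g (Fin.last (2 * g)) (2 * g) (by simp)]
  constructor <;> unfold deltaSigma <;> rw [hr, hs]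
  · rw [if_pos (by omega), if_pos (by omega)]
  · rw [if_pos (by omega), if_neg (by omega), if_pos (by omega)]

lemma deltaSigma_eq_zero {g : ℕ} {r s : Fin (2 * g + 1)} (hr : (r : ℕ) < 2 * g)
    (hs : (s : ℕ) < 2 * g) (h : ¬((s : ℕ) = r + 1 ∧ (r : ℕ) % 2 = 0))
    (h' : ¬((r : ℕ) = s + 1 ∧ (s : ℕ) % 2 = 0)) : deltaSigma g r s = 0 := by
  unfold deltaSigma
  rw [if_pos ⟨hr, hs⟩, if_neg h, if_neg h']

/-- The entries of `δ` in the row and column of `c = 2g`: here `r = 4j + 1 - i` is the symplectic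
partner of `i`. -/
lemma deltaSigma_last {g j : ℕ} {i r s : Fin (2 * g + 1)}
    (hi : (i : ℕ) = 2 * j ∨ (i : ℕ) = 2 * j + 1) (hr : (r : ℕ) = 4 * j + 1 - i)
    (hs : (s : ℕ) = 2 * g) :
    deltaSigma g r s = C ((-1) ^ (i : ℕ)) * X i ∧
      deltaSigma g s r = -(C ((-1) ^ (i : ℕ)) * X i) := by
  rcases hi with hi | hi
  · have hX := xv_val g i (r - 1) (by omega)
    have hC : C ((-1) ^ (i : ℕ)) * X i = (X i : MvPolynomial (Fin (2 * g + 1)) ℂ) := by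
      rw [hi]; simp [pow_mul]
    rw [hC, ← hX]
    constructor <;> unfold deltaSigma
    · rw [if_neg (by omega), if_pos (by omega), if_neg (by omega)]
    · rw [if_neg (by omega), if_neg (by omega), if_pos (by omega), if_neg (by omega)]
  · have hX := xv_val g i (r + 1) (by omega)
    have hC : C ((-1) ^ (i : ℕ)) * X i = -(X i : MvPolynomial (Fin (2 * g + 1)) ℂ) := by
      rw [hi]; simp [pow_succ, pow_mul]
    rw [hC, ← hX, neg_neg]
    constructor <;> unfold deltaSigma
    · rw [if_neg (by omega), if_pos (by omega), if_pos (by omega)]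
    · rw [if_neg (by omega), if_neg (by omega), if_pos (by omega), if_pos (by omega)]

lemma pfaffian_last (g : ℕ) (hg : 1 ≤ g) :
    pfaffian g ((deltaSigma g).submatrix (Fin.last (2 * g)).succAbove
      (Fin.last (2 * g)).succAbove) = X (Fin.last (2 * g)) ^ g := by
  have hval : ∀ k b, (((pairEquiv g (k, b)).castSucc : Fin (2 * g + 1)) : ℕ) = 2 * k + b :=
    pairEquiv_val g
  rw [pfaffian_eq_prod _ 1 (by simp)
    (fun x y => deltaSigma g (pairEquiv g x).castSucc (pairEquiv g y).castSucc)
    (fun _ _ => by simp [Matrix.submatrix_apply])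
    (fun _ => X (Fin.last (2 * g))) ⟨0, hg⟩]
  · simp
  · exact fun k => (deltaSigma_pair k.2 (hval k 0) (hval k 1)).1
  · exact fun k => (deltaSigma_pair k.2 (hval k 0) (hval k 1)).2
  all_goals
    simp only [Prod.forall, ne_eq, Prod.mk.injEq, Fin.ext_iff]
    intros
    apply deltaSigma_eq_zero <;> simp only [hval, Fin.val_zero, Fin.val_one] at * <;> omega

lemma pfaffian_of_lt (g : ℕ) (j : Fin g) (i : Fin (2 * g + 1))
    (hi : (i : ℕ) = 2 * j ∨ (i : ℕ) = 2 * j + 1) :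
    pfaffian g ((deltaSigma g).submatrix i.succAbove i.succAbove) =
      C ((-1) ^ (i : ℕ)) * X i * X (Fin.last (2 * g)) ^ (g - 1) := by
  obtain ⟨τ, hτ, h⟩ := exists_reorder g j i hi
  have hp : (i.succAbove (τ (pairEquiv g (j, 0))) : ℕ) = 4 * j + 1 - i := by simp [h]
  have hq : (i.succAbove (τ (pairEquiv g (j, 1))) : ℕ) = 2 * g := by simp [h]
  have hk : ∀ k b, k ≠ j → (i.succAbove (τ (pairEquiv g (k, b))) : ℕ) = 2 * k + b :=
    fun k b hkj => by rw [h, if_neg hkj]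
  -- Away from `c`, the index sits in the same symplectic pair as its label.
  have hlt : ∀ y : Fin g × Fin 2, y ≠ (j, 1) →
      (i.succAbove (τ (pairEquiv g y)) : ℕ) / 2 = y.1 ∧
        (y.1 = j → (i.succAbove (τ (pairEquiv g y)) : ℕ) = 4 * j + 1 - i) := by
    rintro ⟨k, b⟩ hy
    by_cases hkj : k = j
    · subst hkj
      obtain rfl : b = 0 := by
        fin_cases b
        · rfl
        · exact absurd rfl hy
      exact ⟨by rw [hp]; dsimp only; omega, fun _ => hp⟩
    · exact ⟨by rw [hk k b hkj]; dsimp only; omega, fun h => absurd h hkj⟩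
  have hz : ∀ x y : Fin g × Fin 2, x ≠ (j, 1) → y ≠ (j, 1) → (x.1 = y.1 → x.1 = j) →
      deltaSigma g (i.succAbove (τ (pairEquiv g x))) (i.succAbove (τ (pairEquiv g y))) = 0 := by
    intro x y hx hy hxy
    obtain ⟨hx1, hx2⟩ := hlt x hx
    obtain ⟨hy1, hy2⟩ := hlt y hy
    have := x.1.2
    have := y.1.2
    simp only [Fin.ext_iff] at hxy hx2 hy2
    apply deltaSigma_eq_zero <;> omega
  rw [pfaffian_eq_prod _ τ hτ (fun x y => deltaSigma g (i.succAbove (τ (pairEquiv g x)))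
      (i.succAbove (τ (pairEquiv g y)))) (fun _ _ => rfl)
    (Function.update (fun _ => X (Fin.last (2 * g))) j (C ((-1) ^ (i : ℕ)) * X i)) j]
  · rw [Finset.prod_update_of_mem (Finset.mem_univ j)]
    simp [Finset.card_sdiff]
  · intro k
    by_cases hkj : k = j
    · subst hkj
      rw [Function.update_self]
      exact (deltaSigma_last hi hp hq).1
    · rw [Function.update_of_ne hkj]
      exact (deltaSigma_pair k.2 (hk k 0 hkj) (hk k 1 hkj)).1
  · intro k
    by_cases hkj : k = j
    · subst hkj
      rw [Function.update_self]
      exact (deltaSigma_last hi hp hq).2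
    · rw [Function.update_of_ne hkj]
      exact (deltaSigma_pair k.2 (hk k 0 hkj) (hk k 1 hkj)).2
  · exact fun y hy => hz _ _ (by simp) hy fun _ => rfl
  · exact fun y hy => hz _ _ hy (by simp) id
  · exact fun x y hxy hx hy => hz _ _ hx hy fun h => absurd h hxy

/-- For `M = Σ_g × S¹` with intersection form `μ = Σ_{i=1}^g a_i ∧ b_i ∧ c` and associated
`(2g+1) × (2g+1)` skew-symmetric matrix `δ` of linear forms, the Pfaffian polynomial
`Pf(μ)`, defined by `pf(δ(i;i)) = (-1)^{i+1} x_i Pf(μ)`, equals `x_{2g+1}^{g-1}` up to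
sign. -/
theorem pfaffian_surface_times_circle (g : ℕ) (hg : 1 ≤ g) :
    ∃ ε : ℂ, (ε = 1 ∨ ε = -1) ∧
      ∀ i : Fin (2 * g + 1),
        pfaffian g ((deltaSigma g).submatrix i.succAbove i.succAbove) =
          C (ε * (-1) ^ (i : ℕ)) * X i * (X (Fin.last (2 * g))) ^ (g - 1) := by
  refine ⟨1, Or.inl rfl, fun i => ?_⟩
  rw [one_mul]
  rcases Fin.eq_castSucc_or_eq_last i with ⟨t, rfl⟩ | rfl
  · exact pfaffian_of_lt g ⟨(t : ℕ) / 2, by omega⟩ t.castSucc (by simp only [Fin.val_castSucc]; omega)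
  · rw [pfaffian_last g hg, Fin.val_last, pow_mul]
    obtain ⟨n, rfl⟩ : ∃ n, g = n + 1 := ⟨g - 1, by omega⟩
    simp [pow_succ']
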